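/- For every complex number q with |q| < 1, the sum over all nonnegative integers j of q^(2j^2+2j) · (-q^(2j+2); q)_∞ / ((q^2; q^2)_j) equals the product over all positive integers j with j not congruent to 0, 1, or -1 modulo 7 of 1/(1 - q^j). -/

import Mathlib

/-- The finite q-Pochhammer symbol `(a; q)_n = ∏_{h=0}^{n-1} (1 - a q^h)`. -/
noncomputable def qPoch (a q : ℂ) (n : ℕ) : ℂ := ∏ h ∈ Finset.range n, (1 - a * q ^ h)

/-- The infinite q-Pochhammer symbol `(a; q)_∞ = ∏_{h=0}^{∞} (1 - a q^h)`. -/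
noncomputable def qPochInf (a q : ℂ) : ℂ := ∏' h : ℕ, (1 - a * q ^ h)

/-!
A Bailey pair `(α, β)` relative to `q ^ ℓ` satisfies, as limits of finite identities,
`(q; q)_∞ ∑ q^(n² + ℓ n) β_n = ∑ q^(r² + ℓ r) α_r` and `(q; q)_∞² lim β_n = ∑ α_r`. Folding the
theta series `∑ (-1)^j (y z)^(j(j-1)/2) y^j` over the integers by pairing `j` with `-(j + 1)`
gives terms that serve as `α` in two such pairs. In the first, to the base `y z`, `β_n` is a finite
product whose limit yields the Jacobi triple product. In the second, due to Selberg, the base is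
`q²`, `y = q²`, `z = q`, and `(-q; q)_∞ β_j` is the summand of the Rogers–Selberg series without its
power of `q`. The factor `(q²)^(r² + r)` only replaces `y = q²` by `y = q⁶`, so the series is
`1 / (q; q)_∞` times a triple product to the base `q⁷`, which removes the residue classes
`0, 1, -1` modulo `7` from `1 / (q; q)_∞`.
-/

namespace RogersSelberg

open Filter Finset Topology

section General

theorem norm_pow_lt_one {R : Type*} [SeminormedRing R] [NormOneClass R] {x : R} (hx : ‖x‖ < 1)
    {n : ℕ} (hn : n ≠ 0) : ‖x ^ n‖ < 1 :=
  (norm_pow_le x n).trans_lt (pow_lt_one₀ (norm_nonneg x) hx hn)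

theorem pow_ne_one_of_norm_lt_one {R : Type*} [SeminormedRing R] [NormOneClass R] {x : R}
    (hx : ‖x‖ < 1) {n : ℕ} (hn : n ≠ 0) : x ^ n ≠ 1 := fun h =>
  (norm_pow_lt_one hx hn).ne (h ▸ norm_one)

/-- Creative telescoping: `g` is the certificate. The ones given below are of the kind that the
`q`-Zeilberger algorithm produces. -/
theorem mul_sum_antidiagonal_succ_of_telescoping {R : Type*} [Ring R] {f g : ℕ → ℕ → R} {c d : R}
    {n : ℕ}
    (hstep : ∀ r s, r + s = n → c * f r (s + 1) - d * f r s = g (r + 1) s - g r (s + 1))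
    (hleft : g 0 (n + 1) = 0) (hright : c * f (n + 1) 0 = -g (n + 1) 0) :
    c * ∑ x ∈ antidiagonal (n + 1), f x.1 x.2 = d * ∑ x ∈ antidiagonal n, f x.1 x.2 := by
  have hsum : c * ∑ x ∈ antidiagonal n, f x.1 (x.2 + 1) - d * ∑ x ∈ antidiagonal n, f x.1 x.2 =
      ∑ x ∈ antidiagonal n, g (x.1 + 1) x.2 - ∑ x ∈ antidiagonal n, g x.1 (x.2 + 1) := by
    simp only [mul_sum, ← sum_sub_distrib]
    exact sum_congr rfl fun x hx => hstep x.1 x.2 (mem_antidiagonal.mp hx)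
  have hg : ∑ x ∈ antidiagonal n, g (x.1 + 1) x.2 =
      g (n + 1) 0 + ∑ x ∈ antidiagonal n, g x.1 (x.2 + 1) := by
    rw [← Nat.sum_antidiagonal_succ' (f := fun x => g x.1 x.2), Nat.sum_antidiagonal_succ, hleft,
      zero_add]
  rw [hg, add_sub_cancel_right] at hsum
  rw [Nat.sum_antidiagonal_succ', mul_add, hright, ← hsum]
  abel

theorem tendsto_sum_antidiagonal_mul {R : Type*} [NormedRing R] [CompleteSpace R] {f : ℕ → R}
    {g : ℕ → ℕ → R} {C : ℝ} {l : R} (hf : Summable fun r => ‖f r‖) (hC : ∀ r s, ‖g r s‖ ≤ C)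
    (hg : ∀ r, Tendsto (g r) atTop (𝓝 l)) :
    Tendsto (fun n => ∑ x ∈ antidiagonal n, f x.1 * g x.1 x.2) atTop (𝓝 ((∑' r, f r) * l)) := by
  have hlim := tendsto_tsum_of_dominated_convergence (𝓕 := atTop) (bound := fun r => ‖f r‖ * C)
    (f := fun n r => if r ∈ range (n + 1) then f r * g r (n - r) else 0)
    (g := fun r => f r * l) (hf.mul_right C) (fun r => ?_) (.of_forall fun n r => ?_)
  · rw [hf.of_norm.tsum_mul_right] at hlim
    refine hlim.congr fun n => ?_
    rw [Nat.sum_antidiagonal_eq_sum_range_succ_mk, tsum_eq_sum fun r hr => if_neg hr]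
    exact sum_congr rfl fun r hr => if_pos hr
  · refine (((hg r).comp (tendsto_sub_atTop_nat r)).const_mul (f r)).congr' ?_
    filter_upwards [eventually_ge_atTop r] with n hn
    exact (if_pos (mem_range_succ_iff.mpr hn)).symm
  · have hbound : ‖f r * g r (n - r)‖ ≤ ‖f r‖ * C :=
      (norm_mul_le _ _).trans (mul_le_mul_of_nonneg_left (hC _ _) (norm_nonneg _))
    split_ifs
    · exact hbound
    · simpa using (norm_nonneg _).trans hbound

theorem tsum_sum_antidiagonal {A E : Type*} [AddCommMonoid A] [HasAntidiagonal A]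
    [AddCommGroup E] [UniformSpace E] [IsUniformAddGroup E] [CompleteSpace E] [T0Space E]
    {F : A × A → E} (hF : Summable F) :
    ∑' n, ∑ x ∈ antidiagonal n, F x = ∑' r, ∑' s, F (r, s) := by
  have hsigma := HasAntidiagonal.sigmaAntidiagonalEquivProd.summable_iff.mpr hF
  rw [← hF.tsum_prod, ← HasAntidiagonal.sigmaAntidiagonalEquivProd.tsum_eq]
  refine .trans ?_ hsigma.tsum_sigma.symm
  exact tsum_congr fun n => (Finset.tsum_subtype (antidiagonal n) F).symm

theorem hasProd_mulIndicator_mod_mem {M : Type*} [CommMonoid M] [TopologicalSpace M]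
    [ContinuousMul M] {f a : ℕ → M} {k : ℕ} {S : Finset ℕ} (hS : ∀ i ∈ S, i < k)
    (hf : ∀ i ∈ S, HasProd (fun m => f (k * m + i)) (a i)) :
    HasProd ({n | n % k ∈ S}.mulIndicator f) (∏ i ∈ S, a i) := by
  have hclass : ∀ i ∈ S, HasProd ({n | n % k = i}.mulIndicator f) (a i) := fun i hi => by
    have hk : 0 < k := i.zero_le.trans_lt (hS i hi)
    have hinj : Function.Injective fun m => k * m + i := fun m n hmn =>
      Nat.eq_of_mul_eq_mul_left hk (Nat.add_right_cancel hmn)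
    refine (hinj.hasProd_iff fun n hn => Set.mulIndicator_of_notMem (fun hmod => hn ?_) f).mp ?_
    · exact ⟨n / k, hmod ▸ Nat.div_add_mod n k⟩
    · refine (hf i hi).congr_fun fun m => ?_
      exact Set.mulIndicator_of_mem
        (by rw [Set.mem_ofPred_eq, Nat.mul_add_mod, Nat.mod_eq_of_lt (hS i hi)]) f
  refine (hasProd_prod hclass).congr_fun fun n => ?_
  simp only [Set.mulIndicator_apply, Set.mem_ofPred_eq, prod_ite_eq]

theorem sq_add_self_eq_two_mul_choose (r : ℕ) : r ^ 2 + r = 2 * r.choose 2 + 2 * r := by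
  induction r with
  | zero => rfl
  | succ r ih =>
    rw [Nat.choose_succ_succ', Nat.choose_one_right]
    lia

theorem summable_pow_choose_two_mul_pow {𝕜 : Type*} [NormedField 𝕜] [CompleteSpace 𝕜] {p : 𝕜}
    (hp : ‖p‖ < 1) (w : 𝕜) : Summable fun r : ℕ => p ^ r.choose 2 * w ^ r := by
  have hlim : Tendsto (fun r : ℕ => ‖p ^ r * w‖) atTop (𝓝 0) := by
    simpa using ((tendsto_pow_atTop_nhds_zero_of_norm_lt_one hp).mul_const w).norm
  refine summable_of_ratio_norm_eventually_le one_half_lt_one ?_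
  filter_upwards [hlim.eventually_le_const one_half_pos] with r hr
  calc ‖p ^ (r + 1).choose 2 * w ^ (r + 1)‖ = ‖p ^ r * w‖ * ‖p ^ r.choose 2 * w ^ r‖ := by
        rw [← norm_mul, Nat.choose_succ_succ', Nat.choose_one_right]
        ring_nf
    _ ≤ 1 / 2 * ‖p ^ r.choose 2 * w ^ r‖ := mul_le_mul_of_nonneg_right hr (norm_nonneg _)

end General

section Pochhammer

variable {q : ℂ}

theorem qPoch_zero (a q : ℂ) : qPoch a q 0 = 1 := prod_range_zero _

theorem qPoch_succ (a q : ℂ) (n : ℕ) : qPoch a q (n + 1) = qPoch a q n * (1 - a * q ^ n) :=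
  prod_range_succ _ _

theorem qPoch_ne_zero {a : ℂ} (h : ∀ n, a * q ^ n ≠ 1) (n : ℕ) : qPoch a q n ≠ 0 :=
  prod_ne_zero_iff.mpr fun i _ => sub_ne_zero.mpr (h i).symm

/-- The reciprocal `1 / (q; q)_n`. Finite identities are stated with these reciprocals so that
both sides become polynomial in them. -/
noncomputable def qPochInv (q : ℂ) (n : ℕ) : ℂ := (qPoch q q n)⁻¹

theorem qPochInv_zero (q : ℂ) : qPochInv q 0 = 1 := by
  rw [qPochInv, qPoch_zero, inv_one]

theorem one_sub_pow_mul_qPochInv_succ (hq : ∀ n ≠ 0, q ^ n ≠ 1) (n : ℕ) :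
    (1 - q ^ (n + 1)) * qPochInv q (n + 1) = qPochInv q n := by
  have h : 1 - q ^ (n + 1) ≠ 0 := sub_ne_zero.mpr (hq _ n.succ_ne_zero).symm
  rw [qPochInv, qPoch_succ, ← pow_succ', mul_inv, qPochInv]
  field_simp

theorem sum_antidiagonal_qVandermonde (hq : ∀ n ≠ 0, q ^ n ≠ 1) (L N : ℕ) :
    ∑ x ∈ antidiagonal N,
        q ^ (x.1 ^ 2 + L * x.1) * qPochInv q x.1 * qPochInv q (x.1 + L) * qPochInv q x.2 =
      qPochInv q N * qPochInv q (N + L) := by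
  have hu := one_sub_pow_mul_qPochInv_succ hq
  induction N with
  | zero => simp [qPochInv_zero]
  | succ N ih =>
    have hne (k : ℕ) : 1 - q ^ (k + 1) ≠ 0 := sub_ne_zero.mpr (hq _ k.succ_ne_zero).symm
    have hrec := mul_sum_antidiagonal_succ_of_telescoping (n := N)
      (f := fun k s => q ^ (k ^ 2 + L * k) * qPochInv q k * qPochInv q (k + L) * qPochInv q s)
      (g := fun k s => -(q ^ (k ^ 2 + L * k + s) * ((1 - q ^ k) * qPochInv q k) *
        ((1 - q ^ (k + L)) * qPochInv q (k + L)) * qPochInv q s))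
      (c := (1 - q ^ (N + 1)) * (1 - q ^ (N + L + 1))) (d := 1) ?_ (by simp) (by ring)
    · rw [ih, one_mul, ← hu N, ← hu (N + L)] at hrec
      refine mul_left_cancel₀ (mul_ne_zero (hne N) (hne (N + L))) (hrec.trans ?_)
      rw [add_right_comm]
      ring
    · rintro k s rfl
      rw [hu k, add_right_comm k 1 L, hu (k + L), ← hu s]
      ring

theorem summable_norm_neg_mul_pow (hq : ‖q‖ < 1) (a : ℂ) :
    Summable fun n : ℕ => ‖-(a * q ^ n)‖ :=
  ((summable_geometric_of_norm_lt_one hq).mul_left a).neg.norm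

theorem hasProd_qPochInf (hq : ‖q‖ < 1) (a : ℂ) :
    HasProd (fun n : ℕ => 1 - a * q ^ n) (qPochInf a q) := by
  have h := multipliable_one_add_of_summable (summable_norm_neg_mul_pow hq a)
  simp only [← sub_eq_add_neg] at h
  exact h.hasProd

theorem qPochInf_ne_zero (hq : ‖q‖ < 1) {a : ℂ} (ha : ∀ n, a * q ^ n ≠ 1) : qPochInf a q ≠ 0 := by
  have h := tprod_one_add_ne_zero_of_summable
    (fun n => by simpa [← sub_eq_add_neg, sub_eq_zero] using (ha n).symm)
    (summable_norm_neg_mul_pow hq a)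
  simpa only [qPochInf, ← sub_eq_add_neg] using h

theorem qPochInf_pow_pow_ne_zero (hq : ‖q‖ < 1) {i k : ℕ} (hi : i ≠ 0) (hk : k ≠ 0) :
    qPochInf (q ^ i) (q ^ k) ≠ 0 :=
  qPochInf_ne_zero (norm_pow_lt_one hq hk) fun n => by
    rw [← pow_mul, ← pow_add]
    exact pow_ne_one_of_norm_lt_one hq (by lia)

theorem qPochInf_self_ne_zero (hq : ‖q‖ < 1) : qPochInf q q ≠ 0 := by
  simpa using qPochInf_pow_pow_ne_zero hq one_ne_zero one_ne_zero

theorem tendsto_qPoch (hq : ‖q‖ < 1) (a : ℂ) : Tendsto (qPoch a q) atTop (𝓝 (qPochInf a q)) :=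
  (hasProd_qPochInf hq a).tendsto_prod_nat

theorem qPoch_mul_qPochInf (hq : ‖q‖ < 1) (a : ℂ) (n : ℕ) :
    qPoch a q n * qPochInf (a * q ^ n) q = qPochInf a q := by
  have h := (hasProd_qPochInf hq (a * q ^ n)).multipliable
  simp only [mul_assoc, ← pow_add, add_comm n] at h
  simpa only [qPoch, qPochInf, mul_assoc, ← pow_add, add_comm n] using
    Multipliable.prod_mul_tprod_nat_mul' (f := fun m => 1 - a * q ^ m) h

theorem qPochInf_neg_mul_qPochInf (hq : ‖q‖ < 1) (a : ℂ) :
    qPochInf (-a) q * qPochInf a q = qPochInf (a ^ 2) (q ^ 2) := by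
  refine (((hasProd_qPochInf hq (-a)).mul (hasProd_qPochInf hq a)).congr_fun fun n => ?_).unique
    (hasProd_qPochInf (norm_pow_lt_one hq two_ne_zero) (a ^ 2))
  ring

theorem hasProd_one_sub_mul_pow_mul_add (hq : ‖q‖ < 1) {k : ℕ} (hk : k ≠ 0) (a : ℂ) (i : ℕ) :
    HasProd (fun m => 1 - a * q ^ (k * m + i)) (qPochInf (a * q ^ i) (q ^ k)) := by
  simpa only [mul_assoc, ← pow_mul, ← pow_add, add_comm i] using
    hasProd_qPochInf (norm_pow_lt_one hq hk) (a * q ^ i)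

theorem qPochInf_eq_prod (hq : ‖q‖ < 1) {k : ℕ} (hk : k ≠ 0) (a : ℂ) :
    qPochInf a q = ∏ i ∈ range k, qPochInf (a * q ^ i) (q ^ k) := by
  have hclasses : HasProd ({n | n % k ∈ range k}.mulIndicator fun n => 1 - a * q ^ n)
      (∏ i ∈ range k, qPochInf (a * q ^ i) (q ^ k)) :=
    hasProd_mulIndicator_mod_mem (fun i hi => mem_range.mp hi)
      fun i _ => hasProd_one_sub_mul_pow_mul_add hq hk a i
  have huniv : {n | n % k ∈ range k} = Set.univ :=
    Set.eq_univ_of_forall fun n => mem_range.mpr (n.mod_lt (Nat.pos_of_ne_zero hk))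
  rw [huniv, Set.mulIndicator_univ] at hclasses
  exact (hasProd_qPochInf hq a).unique hclasses

theorem hasProd_inv_one_sub_pow_of_mod_mem (hq : ‖q‖ < 1) {k : ℕ} {S : Finset ℕ}
    (hS : S ⊆ Ioo 0 k) :
    HasProd ({n | n % k ∈ S}.mulIndicator fun n => (1 - q ^ n)⁻¹)
      (∏ i ∈ S, (qPochInf (q ^ i) (q ^ k))⁻¹) := by
  refine hasProd_mulIndicator_mod_mem (fun i hi => (mem_Ioo.mp (hS hi)).2) fun i hi => ?_
  obtain ⟨hi, hik⟩ := mem_Ioo.mp (hS hi)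
  have hk : k ≠ 0 := by lia
  have h := hasProd_one_sub_mul_pow_mul_add hq hk 1 i
  simp only [one_mul] at h
  exact h.inv₀ (qPochInf_pow_pow_ne_zero hq hi.ne' hk)

theorem tendsto_qPochInv (hq : ‖q‖ < 1) :
    Tendsto (qPochInv q) atTop (𝓝 (qPochInf q q)⁻¹) :=
  (tendsto_qPoch hq q).inv₀ (qPochInf_self_ne_zero hq)

theorem exists_norm_qPochInv_le (hq : ‖q‖ < 1) : ∃ C, ∀ n, ‖qPochInv q n‖ ≤ C := by
  obtain ⟨C, hC⟩ := (Metric.isBounded_range_of_tendsto _ (tendsto_qPochInv hq)).exists_norm_le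
  exact ⟨C, fun n => hC _ ⟨n, rfl⟩⟩

theorem exists_norm_qPochInv_mul_le (hq : ‖q‖ < 1) :
    ∃ C, ∀ m n, ‖qPochInv q m * qPochInv q n‖ ≤ C := by
  obtain ⟨C, hC⟩ := exists_norm_qPochInv_le hq
  refine ⟨C * C, fun m n => ?_⟩
  rw [norm_mul]
  exact mul_le_mul (hC m) (hC n) (norm_nonneg _) ((norm_nonneg _).trans (hC m))

theorem exists_summable_norm_durfee_rectangle_le (hq : ‖q‖ < 1) : ∃ b : ℕ → ℝ, Summable b ∧
    ∀ L k, ‖q ^ (k ^ 2 + L * k) * (qPochInv q k * qPochInv q (k + L))‖ ≤ b k := by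
  obtain ⟨C, hC⟩ := exists_norm_qPochInv_mul_le hq
  refine ⟨fun k => ‖q‖ ^ k * C,
    (summable_geometric_of_lt_one (norm_nonneg q) hq).mul_right C, fun L k => ?_⟩
  rw [norm_mul, norm_pow]
  exact mul_le_mul (pow_le_pow_of_le_one (norm_nonneg q) hq.le (by nlinarith)) (hC _ _)
    (norm_nonneg _) (by positivity)

theorem tsum_durfee_rectangle (hq : ‖q‖ < 1) (L : ℕ) :
    ∑' k, q ^ (k ^ 2 + L * k) * (qPochInv q k * qPochInv q (k + L)) = (qPochInf q q)⁻¹ := by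
  obtain ⟨C, hC⟩ := exists_norm_qPochInv_le hq
  have hinv := tendsto_qPochInv hq
  obtain ⟨b, hb, hle⟩ := exists_summable_norm_durfee_rectangle_le hq
  have hleft := tendsto_sum_antidiagonal_mul (hb.of_nonneg_of_le (fun _ => norm_nonneg _) (hle L))
    (fun _ s => hC s) fun _ => hinv
  simp only [← mul_assoc, sum_antidiagonal_qVandermonde fun _ => pow_ne_one_of_norm_lt_one hq]
    at hleft
  simpa only [← mul_assoc] using mul_right_cancel₀ (inv_ne_zero (qPochInf_self_ne_zero hq))
    (tendsto_nhds_unique hleft (hinv.mul ((tendsto_add_atTop_iff_nat L).mpr hinv)))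

end Pochhammer

section BaileyPair

variable {q : ℂ}

/-- Bailey pairs relative to `a = q ^ ℓ`, in the normalization
`β n = ∑ r ≤ n, α r / ((q; q)_{n-r} (q; q)_{n+r+ℓ})`; the factor `(q; q)_ℓ` that separates
`(q; q)_{n+r+ℓ}` from the usual `(a q; q)_{n+r}` is absorbed into `α`. -/
def IsBaileyPair (q : ℂ) (ℓ : ℕ) (α β : ℕ → ℂ) : Prop :=
  ∀ n, β n = ∑ x ∈ antidiagonal n, α x.1 * qPochInv q x.2 * qPochInv q (x.2 + 2 * x.1 + ℓ)

theorem IsBaileyPair.of_certificate (hq : ∀ n ≠ 0, q ^ n ≠ 1) {ℓ : ℕ} {α β c d : ℕ → ℂ}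
    {g : ℕ → ℕ → ℂ} (hc : ∀ n, c n ≠ 0) (hzero : β 0 = α 0 * qPochInv q (ℓ + 1))
    (hβ : ∀ n, c n * β (n + 1) = d n * β n)
    (hstep : ∀ r s,
      α r * (c (r + s) - d (r + s) * (1 - q ^ (s + 1)) * (1 - q ^ (s + 2 * r + ℓ + 2))) =
        g (r + 1) s * (1 - q ^ (s + 1)) - g r (s + 1) * (1 - q ^ (s + 2 * r + ℓ + 2)))
    (hleft : ∀ s, g 0 s = 0)
    (hright : ∀ r, α (r + 1) * c r = -(g (r + 1) 0 * (1 - q ^ (2 * r + ℓ + 3)))) :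
    IsBaileyPair q (ℓ + 1) α β := by
  have hu := one_sub_pow_mul_qPochInv_succ hq
  intro n
  induction n with
  | zero => simp [hzero, qPochInv_zero]
  | succ n ih =>
    refine mul_left_cancel₀ (hc n) ?_
    rw [hβ, ih]
    refine (mul_sum_antidiagonal_succ_of_telescoping
      (f := fun r s => α r * qPochInv q s * qPochInv q (s + 2 * r + (ℓ + 1)))
      (g := fun r s => g r s * qPochInv q s * qPochInv q (s + 2 * r + ℓ))
      ?_ (by simp [hleft]) ?_).symm
    · rintro r s rfl
      have hshift₁ : s + 1 + 2 * r + (ℓ + 1) = s + 2 * r + ℓ + 1 + 1 := by ring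
      have hshift₂ : s + 2 * (r + 1) + ℓ = s + 2 * r + ℓ + 1 + 1 := by ring
      have hshift₃ : s + 1 + 2 * r + ℓ = s + 2 * r + ℓ + 1 := by ring
      rw [hshift₁, hshift₂, hshift₃, ← add_assoc, ← hu s, ← hu (s + 2 * r + ℓ + 1)]
      linear_combination
        qPochInv q (s + 1) * qPochInv q (s + 2 * r + ℓ + 1 + 1) * hstep r s
    · have hshift : 0 + 2 * (n + 1) + (ℓ + 1) = 2 * n + ℓ + 2 + 1 := by ring
      have hshift' : 0 + 2 * (n + 1) + ℓ = 2 * n + ℓ + 2 := by ring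
      rw [hshift, hshift', ← hu (2 * n + ℓ + 2)]
      linear_combination
        qPochInv q 0 * qPochInv q (2 * n + ℓ + 2 + 1) * hright n

theorem IsBaileyPair.tendsto {ℓ : ℕ} {α β : ℕ → ℂ} (h : IsBaileyPair q ℓ α β) (hq : ‖q‖ < 1)
    (hα : Summable fun r => ‖α r‖) :
    Tendsto β atTop (𝓝 ((∑' r, α r) * ((qPochInf q q)⁻¹ * (qPochInf q q)⁻¹))) := by
  obtain ⟨C, hC⟩ := exists_norm_qPochInv_mul_le hq
  have hinv := tendsto_qPochInv hq
  refine (tendsto_sum_antidiagonal_mul hα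
    (g := fun r s => qPochInv q s * qPochInv q (s + 2 * r + ℓ)) (fun _ _ => hC _ _)
    fun r => hinv.mul ?_).congr fun n => ?_
  · simp only [add_assoc]
    exact (tendsto_add_atTop_iff_nat (2 * r + ℓ)).mpr hinv
  · simp only [h n, mul_assoc]

theorem IsBaileyPair.tsum_eq {ℓ : ℕ} {α β : ℕ → ℂ} (h : IsBaileyPair q ℓ α β) (hq : ‖q‖ < 1)
    (hα : Summable fun r => ‖q ^ (r ^ 2 + ℓ * r) * α r‖) :
    ∑' n, q ^ (n ^ 2 + ℓ * n) * β n =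
      (∑' r, q ^ (r ^ 2 + ℓ * r) * α r) * (qPochInf q q)⁻¹ := by
  obtain ⟨b, hb, hle⟩ := exists_summable_norm_durfee_rectangle_le hq
  let F (x : ℕ × ℕ) : ℂ := q ^ (x.1 ^ 2 + ℓ * x.1) * α x.1 *
    (q ^ (x.2 ^ 2 + (2 * x.1 + ℓ) * x.2) * (qPochInv q x.2 * qPochInv q (x.2 + (2 * x.1 + ℓ))))
  have hF : Summable F := by
    refine .of_norm_bounded (hα.mul_of_nonneg hb (fun _ => norm_nonneg _)
      fun s => (norm_nonneg _).trans (hle 0 s)) fun x => ?_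
    rw [norm_mul]
    exact mul_le_mul_of_nonneg_left (hle _ _) (norm_nonneg _)
  calc ∑' n, q ^ (n ^ 2 + ℓ * n) * β n = ∑' n, ∑ x ∈ antidiagonal n, F x := by
        refine tsum_congr fun n => ?_
        rw [h n, mul_sum]
        refine sum_congr rfl fun x hx => ?_
        rw [← mem_antidiagonal.mp hx]
        simp only [F, add_assoc]
        ring
    _ = ∑' r, q ^ (r ^ 2 + ℓ * r) * α r * (qPochInf q q)⁻¹ := by
        rw [tsum_sum_antidiagonal hF]
        exact tsum_congr fun r => by simp only [F, tsum_mul_left, tsum_durfee_rectangle hq]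
    _ = _ := tsum_mul_right

/-- The terms `(-1)^j (yz)^(j(j-1)/2) y^j` of the bilateral theta series, folded by adding those
with index `r` and `-(r + 1)`. -/
noncomputable def thetaTerm (y z : ℂ) (r : ℕ) : ℂ :=
  (-1) ^ r * (y * z) ^ r.choose 2 * y ^ r * (1 - z ^ (2 * r + 1))

theorem thetaTerm_zero (y z : ℂ) : thetaTerm y z 0 = 1 - z := by
  simp [thetaTerm]

theorem pow_mul_thetaTerm (w y z : ℂ) (r : ℕ) :
    w ^ (r ^ 2 + r) * thetaTerm y z r = thetaTerm (w ^ 2 * y) z r := by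
  rw [thetaTerm, thetaTerm, sq_add_self_eq_two_mul_choose]
  ring

theorem isBaileyPair_thetaTerm {y z : ℂ} (hyz : ∀ n ≠ 0, (y * z) ^ n ≠ 1) :
    IsBaileyPair (y * z) 1 (thetaTerm y z) fun n =>
      qPoch z (y * z) (n + 1) * qPoch y (y * z) n * qPochInv (y * z) (2 * n + 1) := by
  have hu := one_sub_pow_mul_qPochInv_succ hyz
  have hne (k : ℕ) : 1 - (y * z) ^ (k + 1) ≠ 0 := sub_ne_zero.mpr (hyz _ k.succ_ne_zero).symm
  refine .of_certificate hyz
    (c := fun n => (1 - (y * z) ^ (2 * n + 2)) * (1 - (y * z) ^ (2 * n + 3)))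
    (d := fun n => (1 - z * (y * z) ^ (n + 1)) * (1 - y * (y * z) ^ n))
    (g := fun r s => -((-1) ^ r * (y * z) ^ r.choose 2 *
      (y ^ r * ((y * z) ^ s - z * (y * z) ^ (r + 2 * s) + z * (y * z) ^ (r + s) -
          (y * z) ^ (2 * (r + s))) -
        z ^ r * ((y * z) ^ (2 * r + s) - z * (y * z) ^ (3 * r + 2 * s) + z * (y * z) ^ (r + s) -
          (y * z) ^ (2 * (r + s))))))
    (fun n => mul_ne_zero (hne _) (hne _)) ?_ (fun n => ?_) (fun r s => ?_) (fun s => by simp)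
    (fun r => ?_)
  · rw [qPoch_succ, qPoch_zero, qPoch_zero, thetaTerm_zero]
    ring
  · rw [mul_add_one 2 n, qPoch_succ z _ (n + 1), qPoch_succ y, ← hu (2 * n + 1), ← hu (2 * n + 2)]
    ring
  · rw [thetaTerm, Nat.choose_succ_succ', Nat.choose_one_right]
    ring
  · rw [thetaTerm]
    ring

theorem isBaileyPair_selberg (hq : ∀ n ≠ 0, q ^ n ≠ 1) :
    IsBaileyPair (q ^ 2) 1 (thetaTerm (q ^ 2) q) fun n =>
      (qPoch (q ^ 2) (q ^ 2) n * qPoch (-q) q (2 * n + 1))⁻¹ := by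
  have hsq : ∀ n ≠ 0, (q ^ 2) ^ n ≠ 1 := fun n hn => by
    rw [← pow_mul]
    exact hq _ (by positivity)
  have hu := one_sub_pow_mul_qPochInv_succ hsq
  have hadd (n : ℕ) : 1 + q ^ (n + 1) ≠ 0 := fun h => hsq (n + 1) n.succ_ne_zero (by
    rw [pow_right_comm, ← neg_eq_of_add_eq_zero_right h]
    norm_num)
  have hsub (n : ℕ) : 1 - q ^ (n + 1) ≠ 0 := sub_ne_zero.mpr (hq _ n.succ_ne_zero).symm
  refine .of_certificate hsq (c := fun n => (1 - q ^ (4 * n + 4)) * (1 + q ^ (2 * n + 3)))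
    (d := fun _ => 1)
    (g := fun r s => (-1) ^ r * (q ^ 2 * q) ^ r.choose 2 * q ^ (2 * r) *
      (q ^ (2 * s) * (q ^ (3 * r) - 1) + q ^ (3 * r + 4 * s) * (q ^ r - 1)))
    (fun n => mul_ne_zero (hsub _) (hadd _)) ?_ (fun n => ?_) (fun r s => ?_) (fun s => by simp)
    (fun r => ?_)
  · rw [← mul_right_inj' (hadd 0), qPoch_succ, qPoch_zero, qPoch_zero, thetaTerm_zero]
    calc (1 + q ^ (0 + 1)) * (1 * (1 * (1 - -q * q ^ (2 * 0))))⁻¹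
        = (1 + q ^ (0 + 1)) * (1 + q ^ (0 + 1))⁻¹ := by ring
      _ = (1 - (q ^ 2) ^ (0 + 1)) * qPochInv (q ^ 2) (0 + 1) := by
        rw [mul_inv_cancel₀ (hadd 0), hu, qPochInv_zero]
      _ = (1 + q ^ (0 + 1)) * ((1 - q) * qPochInv (q ^ 2) 1) := by ring
  · have hprod : qPoch (q ^ 2) (q ^ 2) (n + 1) * qPoch (-q) q (2 * (n + 1) + 1) =
        (1 - q ^ (4 * n + 4)) * (1 + q ^ (2 * n + 3)) *
          (qPoch (q ^ 2) (q ^ 2) n * qPoch (-q) q (2 * n + 1)) := by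
      rw [qPoch_succ, mul_add_one, add_right_comm, qPoch_succ (-q), qPoch_succ (-q)]
      ring
    rw [hprod, mul_inv, mul_inv_cancel_left₀ (mul_ne_zero (hsub _) (hadd _)), one_mul]
  · rw [thetaTerm, Nat.choose_succ_succ', Nat.choose_one_right]
    ring
  · rw [thetaTerm]
    ring

theorem summable_norm_thetaTerm {y z : ℂ} (hyz : ‖y * z‖ < 1) :
    Summable fun r => ‖thetaTerm y z r‖ := by
  refine (((summable_pow_choose_two_mul_pow hyz (-y)).sub
    ((summable_pow_choose_two_mul_pow hyz (-(y * z ^ 2))).mul_left z)).congr fun r => ?_).norm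
  rw [thetaTerm, neg_pow y, neg_pow (y * z ^ 2)]
  ring

theorem tsum_thetaTerm {y z : ℂ} (hyz : ‖y * z‖ < 1) :
    ∑' r, thetaTerm y z r =
      qPochInf z (y * z) * qPochInf y (y * z) * qPochInf (y * z) (y * z) := by
  have hne := qPochInf_self_ne_zero hyz
  have hodd : Tendsto (fun n => 2 * n + 1) atTop atTop :=
    tendsto_atTop_mono (fun n => show n ≤ 2 * n + 1 by lia) tendsto_id
  have hpair := (isBaileyPair_thetaTerm fun _ => pow_ne_one_of_norm_lt_one hyz).tendsto hyz
    (summable_norm_thetaTerm hyz)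
  have hprod := (((tendsto_add_atTop_iff_nat 1).mpr (tendsto_qPoch hyz z)).mul
    (tendsto_qPoch hyz y)).mul ((tendsto_qPochInv hyz).comp hodd)
  have huniq := tendsto_nhds_unique hpair hprod
  field_simp at huniq
  rw [huniq]
  ring

end BaileyPair

section RogersSelbergIdentity

variable {q : ℂ}

theorem qPochInf_neg_pow_div_qPoch (hq : ‖q‖ < 1) (j : ℕ) :
    qPochInf (-(q ^ (2 * j + 2))) q / qPoch (q ^ 2) (q ^ 2) j =
      qPochInf (-q) q * (qPoch (q ^ 2) (q ^ 2) j * qPoch (-q) q (2 * j + 1))⁻¹ := by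
  have hne : qPoch (-q) q (2 * j + 1) ≠ 0 := qPoch_ne_zero (fun n hn => by
    refine pow_ne_one_of_norm_lt_one hq (n := 2 * (n + 1)) (by lia) ?_
    calc q ^ (2 * (n + 1)) = (-q * q ^ n) ^ 2 := by ring
      _ = 1 := by rw [hn, one_pow]) _
  rw [← qPoch_mul_qPochInf hq (-q) (2 * j + 1), neg_mul, ← pow_succ']
  field_simp

theorem tsum_rogers_selberg_eq_tsum_thetaTerm (hq : ‖q‖ < 1) :
    ∑' j : ℕ, q ^ (2 * j ^ 2 + 2 * j) * qPochInf (-(q ^ (2 * j + 2))) q / qPoch (q ^ 2) (q ^ 2) j =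
      (qPochInf q q)⁻¹ * ∑' r, thetaTerm (q ^ 6) q r := by
  have hsq : ‖q ^ 2‖ < 1 := norm_pow_lt_one hq two_ne_zero
  have htheta (r : ℕ) : (q ^ 2) ^ (r ^ 2 + 1 * r) * thetaTerm (q ^ 2) q r =
      thetaTerm (q ^ 6) q r := by
    rw [one_mul, pow_mul_thetaTerm, ← pow_mul, ← pow_add]
  have hseven : ‖q ^ 6 * q‖ < 1 := pow_succ q 6 ▸ norm_pow_lt_one hq (by lia)
  have hbailey := (isBaileyPair_selberg fun _ => pow_ne_one_of_norm_lt_one hq).tsum_eq hsq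
    (by simpa only [htheta] using summable_norm_thetaTerm hseven)
  calc _ = ∑' j, qPochInf (-q) q * ((q ^ 2) ^ (j ^ 2 + 1 * j) *
          (qPoch (q ^ 2) (q ^ 2) j * qPoch (-q) q (2 * j + 1))⁻¹) :=
        tsum_congr fun j => by rw [mul_div_assoc, qPochInf_neg_pow_div_qPoch hq]; ring
    _ = qPochInf (-q) q * ((∑' r, thetaTerm (q ^ 6) q r) * (qPochInf (q ^ 2) (q ^ 2))⁻¹) := by
        rw [tsum_mul_left, hbailey, tsum_congr htheta]
    _ = (qPochInf q q)⁻¹ * ∑' r, thetaTerm (q ^ 6) q r := by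
        have hne := qPochInf_neg_mul_qPochInf hq q ▸ qPochInf_self_ne_zero hsq
        have hneg := left_ne_zero_of_mul hne
        rw [← qPochInf_neg_mul_qPochInf hq]
        field_simp

theorem tprod_inv_one_sub_pow_mod_seven (hq : ‖q‖ < 1) :
    ∏' j : {j : ℕ // 0 < j ∧ j % 7 ≠ 0 ∧ j % 7 ≠ 1 ∧ j % 7 ≠ 6}, (1 - q ^ (j : ℕ))⁻¹ =
      (qPochInf q q)⁻¹ * (qPochInf q (q ^ 7) * qPochInf (q ^ 6) (q ^ 7) *
        qPochInf (q ^ 7) (q ^ 7)) := by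
  have hset : {n | n % 7 ∈ Icc 2 5} = {n | 0 < n ∧ n % 7 ≠ 0 ∧ n % 7 ≠ 1 ∧ n % 7 ≠ 6} := by
    ext n
    simp only [mem_Icc, Set.mem_ofPred_eq]
    lia
  have hprod := hasProd_inv_one_sub_pow_of_mod_mem hq (k := 7) (S := Icc 2 5) (by decide)
  rw [hset, ← hasProd_subtype_iff_mulIndicator] at hprod
  have hsplit : qPochInf q q = ∏ i ∈ Icc 1 7, qPochInf (q ^ i) (q ^ 7) := by
    rw [qPochInf_eq_prod hq (k := 7) (by lia), ← Ico_add_one_right_eq_Icc, prod_Ico_eq_prod_range]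
    simp only [pow_add, pow_one, Nat.add_one_sub_one]
  have hthree : ∏ i ∈ ({1, 6, 7} : Finset ℕ), qPochInf (q ^ i) (q ^ 7) =
      qPochInf q (q ^ 7) * qPochInf (q ^ 6) (q ^ 7) * qPochInf (q ^ 7) (q ^ 7) := by
    simp [mul_assoc]
  have hne : ∏ i ∈ ({1, 6, 7} : Finset ℕ), qPochInf (q ^ i) (q ^ 7) ≠ 0 :=
    prod_ne_zero_iff.mpr fun i hi => qPochInf_pow_pow_ne_zero hq
      (by rintro rfl; simp at hi) (by lia)
  refine hprod.tprod_eq.trans ?_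
  rw [hsplit, show Icc 1 7 = {1, 6, 7} ∪ Icc 2 5 by decide, prod_union (by decide), ← hthree,
    mul_inv, mul_right_comm, inv_mul_cancel₀ hne, one_mul, prod_inv_distrib]

end RogersSelbergIdentity

end RogersSelberg

/-- The first Rogers–Selberg identity (mod 7). -/
theorem rogers_selberg_first (q : ℂ) (hq : ‖q‖ < 1) :
    ∑' j : ℕ, q ^ (2 * j ^ 2 + 2 * j) * qPochInf (-(q ^ (2 * j + 2))) q / qPoch (q ^ 2) (q ^ 2) j =
      ∏' j : {j : ℕ // 0 < j ∧ j % 7 ≠ 0 ∧ j % 7 ≠ 1 ∧ j % 7 ≠ 6},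
        (1 - q ^ (j : ℕ))⁻¹ := by
  have hseven : ‖q ^ 6 * q‖ < 1 := pow_succ q 6 ▸ RogersSelberg.norm_pow_lt_one hq (by lia)
  calc _ = (qPochInf q q)⁻¹ * ∑' r, RogersSelberg.thetaTerm (q ^ 6) q r :=
        RogersSelberg.tsum_rogers_selberg_eq_tsum_thetaTerm hq
    _ = (qPochInf q q)⁻¹ *
          (qPochInf q (q ^ 7) * qPochInf (q ^ 6) (q ^ 7) * qPochInf (q ^ 7) (q ^ 7)) := by
        rw [RogersSelberg.tsum_thetaTerm hseven, ← pow_succ]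
    _ = _ := (RogersSelberg.tprod_inv_one_sub_pow_mod_seven hq).symm
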